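/- arXiv:cond-mat/0205123 — 3 statements merged into one kernel-verified Lean document; each statement's English description precedes it below -/
import Mathlib

section
/- Let x and x̄ be two piecewise constant functional order parameters (with possibly different level sequences) such that x(q) ≤ x̄(q) for all q ∈ [0,1]. Then the Parisi functions satisfy f(q,y;x,β) ≤ f(q,y;x̄,β) for every q ∈ [0,1], every y ∈ ℝ, and every β ≥ 0. -/
open MeasureTheory ProbabilityTheory Filter

noncomputable section

/-! ## Gaussian disorder -/

/-- The standard (centered, unit variance) Gaussian measure on `ℝ`. -/
def stdGauss : Measure ℝ := gaussianReal 0 1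

instance : IsProbabilityMeasure stdGauss := by unfold stdGauss; infer_instance

/-- `N` i.i.d. standard Gaussian variables. -/
def gaussN (N : ℕ) : Measure (Fin N → ℝ) := Measure.pi fun _ => stdGauss

instance (N : ℕ) : IsProbabilityMeasure (gaussN N) := by unfold gaussN; infer_instance

/-- The i.i.d. standard Gaussian couplings `J_{ij}` (only entries with `i < j` are used). -/
def gaussC (N : ℕ) : Measure (Fin N → Fin N → ℝ) := Measure.pi fun _ => gaussN N

instance (N : ℕ) : IsProbabilityMeasure (gaussC N) := by unfold gaussC; infer_instance

/-- The i.i.d. standard Gaussian one-body fields `J_i^a`, `a = 1, …, K`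
(row `⟨a-1⟩ : Fin K` corresponds to the level `a` of the paper). -/
def gaussS (K N : ℕ) : Measure (Fin K → Fin N → ℝ) := Measure.pi fun _ => gaussN N

instance (K N : ℕ) : IsProbabilityMeasure (gaussS K N) := by unfold gaussS; infer_instance

/-- I.i.d. standard Gaussian couplings indexed by subsets of sites, for the p-spin model
(only the cardinality-`p` subsets are used). -/
def gaussP (N : ℕ) : Measure (Finset (Fin N) → ℝ) := Measure.pi fun _ => stdGauss

instance (N : ℕ) : IsProbabilityMeasure (gaussP N) := by unfold gaussP; infer_instance

/-! ## Spins and overlaps -/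

/-- The spin value (`±1`) of a Boolean configuration entry. -/
def spin (b : Bool) : ℝ := if b then 1 else -1

/-- The overlap `q₁₂ = N⁻¹ ∑ᵢ σᵢ⁽¹⁾ σᵢ⁽²⁾` of two replicas. -/
def overlap (N : ℕ) (σ τ : Fin N → Bool) : ℝ := (N : ℝ)⁻¹ * ∑ i, spin (σ i) * spin (τ i)

/-! ## Piecewise constant functional order parameters and the Parisi function -/

/-- One backward step of the Parisi recursion on an interval of constancy of the
functional order parameter: from `g = f(q_a, ·)`, with value `m` of the order parameter
and `s = q_a - q`, produce `f(q, ·)`. -/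
def pStep (m s : ℝ) (g : ℝ → ℝ) (y : ℝ) : ℝ :=
  if m = 0 then ∫ z, g (y + z * Real.sqrt s) ∂stdGauss
  else m⁻¹ * Real.log (∫ z, Real.exp (m * g (y + z * Real.sqrt s)) ∂stdGauss)

/-- `parisiLevel K q m β j` is the Parisi function `f(q_{K-j}, ·; x, β)` at the node
`q_{K-j}`, obtained by `j` backward steps from the final condition `f(q_K, y) = log cosh (β y)`. -/
def parisiLevel (K : ℕ) (q m : ℕ → ℝ) (β : ℝ) : ℕ → ℝ → ℝ
  | 0 => fun y => Real.log (Real.cosh (β * y))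
  | j + 1 => pStep (m (K - j)) (q (K - j) - q (K - j - 1)) (parisiLevel K q m β j)

/-- The Parisi function `f(r, y; x, β)` for a piecewise constant order parameter `x`
given by nodes `q` and values `m`:  for `q_{a-1} ≤ r ≤ q_a` it is obtained from
`f(q_a, ·)` by one backward step with value `m_a` over a time `q_a - r`. -/
def parisiF (K : ℕ) (q m : ℕ → ℝ) (β : ℝ) (r y : ℝ) : ℝ :=
  pStep (m (sInf {a : ℕ | r ≤ q a})) (q (sInf {a : ℕ | r ≤ q a}) - r)
    (parisiLevel K q m β (K - sInf {a : ℕ | r ≤ q a})) y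

/-- The functional order parameter as a function: `x(r) = m_a` for `q_{a-1} ≤ r < q_a`,
and `x(1) = m_K`. -/
def xFun (K : ℕ) (q m : ℕ → ℝ) (r : ℝ) : ℝ :=
  if 1 ≤ r then m K else m (sInf {a : ℕ | r < q a})

/-- A piecewise constant functional order parameter:
`0 = q_0 ≤ q_1 ≤ … ≤ q_K = 1`, `0 ≤ m_1 ≤ … ≤ m_K ≤ 1`,
with the conventions `m_0 = 0`, `m_{K+1} = 1`. -/
structure OrderParam where
  K : ℕ
  hK : 1 ≤ K
  q : ℕ → ℝ
  m : ℕ → ℝ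
  hq0 : q 0 = 0
  hqK : q K = 1
  hq_mono : ∀ a, a < K → q a ≤ q (a + 1)
  hm0 : m 0 = 0
  hmtop : m (K + 1) = 1
  hm1 : 0 ≤ m 1
  hm_mono : ∀ a, 1 ≤ a → a < K → m a ≤ m (a + 1)
  hmK : m K ≤ 1

/-- Guerra's trial function `ᾱ(β, h; x) = log 2 + f(0, h; x, β) - (β²/2) ∫₀¹ r x(r) dr`. -/
def trialAlpha (K : ℕ) (q m : ℕ → ℝ) (β h : ℝ) : ℝ :=
  Real.log 2 + parisiLevel K q m β K h - β ^ 2 / 2 * ∫ r in (0 : ℝ)..1, r * xFun K q m r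

/-! ## The Sherrington–Kirkpatrick model -/

/-- The SK Hamiltonian `H_N(σ, h, J) = -(1/√N) ∑_{i<j} J_{ij} σ_i σ_j - h ∑_i σ_i`. -/
def hamSK (N : ℕ) (h : ℝ) (Jc : Fin N → Fin N → ℝ) (σ : Fin N → Bool) : ℝ :=
  -(1 / Real.sqrt N) * ∑ i, ∑ j, (if i < j then Jc i j * spin (σ i) * spin (σ j) else 0)
    - h * ∑ i, spin (σ i)

/-- The SK partition function `Z_N(β, h, J)`. -/
def ZSK (N : ℕ) (β h : ℝ) (Jc : Fin N → Fin N → ℝ) : ℝ :=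
  ∑ σ : Fin N → Bool, Real.exp (-(β * hamSK N h Jc σ))

/-- The quenched average `N⁻¹ E log Z_N(β, h, J)`. -/
def quenchedFE (N : ℕ) (β h : ℝ) : ℝ :=
  (N : ℝ)⁻¹ * ∫ Jc, Real.log (ZSK N β h Jc) ∂gaussC N

/-- The ground state energy density `e_N(J, h)`, defined by
`-e_N(J, h) = N⁻¹ min_σ H_N(σ, h, J)`. -/
def eGS (N : ℕ) (h : ℝ) (Jc : Fin N → Fin N → ℝ) : ℝ :=
  -((N : ℝ)⁻¹ * ⨅ σ : Fin N → Bool, hamSK N h Jc σ)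

/-- The quenched ground state energy density `e_N(h) = E(e_N(J, h))`. -/
def eQuenched (N : ℕ) (h : ℝ) : ℝ := ∫ Jc, eGS N h Jc ∂gaussC N

/-! ## The interpolating system -/

/-- The interpolating Boltzmann factor. -/
def bFac (N K : ℕ) (β h t : ℝ) (q : ℕ → ℝ) (Jc : Fin N → Fin N → ℝ)
    (Js : Fin K → Fin N → ℝ) (σ : Fin N → Bool) : ℝ :=
  Real.exp (β * Real.sqrt (t / N) *
        ∑ i, ∑ j, (if i < j then Jc i j * spin (σ i) * spin (σ j) else 0)
      + β * h * ∑ i, spin (σ i)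
      + β * Real.sqrt (1 - t) *
          ∑ a : Fin K, Real.sqrt (q (a.val + 1) - q a.val) * ∑ i, Js a i * spin (σ i))

/-- The interpolating partition function `Z̃_N(β, h; t; x; J)`. -/
def Ztil (N K : ℕ) (β h t : ℝ) (q : ℕ → ℝ) (Jc : Fin N → Fin N → ℝ)
    (Js : Fin K → Fin N → ℝ) : ℝ :=
  ∑ σ : Fin N → Bool, bFac N K β h t q Jc Js σ

/-- `Wrec … j` is the random variable `Z_{K-j}`:  `Z_K = Z̃_N` and
`Z_{a-1} = (E_a (Z_a^{m_a}))^{1/m_a}`, where `E_a` integrates the Gaussian row `J^a`. -/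
def Wrec (N K : ℕ) (β h t : ℝ) (q m : ℕ → ℝ) :
    ℕ → (Fin N → Fin N → ℝ) → (Fin K → Fin N → ℝ) → ℝ
  | 0 => Ztil N K β h t q
  | j + 1 => fun Jc Js =>
      if hj : j < K then
        (∫ g : Fin N → ℝ,
            (Wrec N K β h t q m j Jc (Function.update Js ⟨K - 1 - j, by omega⟩ g)) ^ m (K - j)
          ∂gaussN N) ^ (m (K - j))⁻¹
      else Wrec N K β h t q m j Jc Js

/-- `Zrec … a` is the random variable `Z_a` of the broken replica interpolation. -/
def Zrec (N K : ℕ) (β h t : ℝ) (q m : ℕ → ℝ) (a : ℕ) :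
    (Fin N → Fin N → ℝ) → (Fin K → Fin N → ℝ) → ℝ :=
  Wrec N K β h t q m (K - a)

/-- The interpolating auxiliary function `α̃_N(t) = N⁻¹ E₀ log Z₀`. -/
def atilde (N K : ℕ) (β h : ℝ) (q m : ℕ → ℝ) (t : ℝ) : ℝ :=
  (N : ℝ)⁻¹ * ∫ Jc, Real.log (Wrec N K β h t q m K Jc 0) ∂gaussC N

/-- The normalized weight `f_a = Z_a^{m_a} / E_a(Z_a^{m_a}) = Z_a^{m_a} / Z_{a-1}^{m_a}`. -/
def fWeight (N K : ℕ) (β h t : ℝ) (q m : ℕ → ℝ) (a : ℕ) (Jc : Fin N → Fin N → ℝ)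
    (Js : Fin K → Fin N → ℝ) : ℝ :=
  Zrec N K β h t q m a Jc Js ^ m a / Zrec N K β h t q m (a - 1) Jc Js ^ m a

/-- The Gibbs expectation `ω(A)` of the interpolating Boltzmann factor. -/
def gibbs (N K : ℕ) (β h t : ℝ) (q : ℕ → ℝ) (A : (Fin N → Bool) → ℝ)
    (Jc : Fin N → Fin N → ℝ) (Js : Fin K → Fin N → ℝ) : ℝ :=
  (∑ σ : Fin N → Bool, A σ * bFac N K β h t q Jc Js σ) / Ztil N K β h t q Jc Js

/-- The two-replica Gibbs product expectation `Ω(A)`. -/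
def gibbs2 (N K : ℕ) (β h t : ℝ) (q : ℕ → ℝ) (A : (Fin N → Bool) → (Fin N → Bool) → ℝ)
    (Jc : Fin N → Fin N → ℝ) (Js : Fin K → Fin N → ℝ) : ℝ :=
  (∑ σ : Fin N → Bool, ∑ τ : Fin N → Bool,
      A σ τ * bFac N K β h t q Jc Js σ * bFac N K β h t q Jc Js τ) /
    Ztil N K β h t q Jc Js ^ 2

/-- `omT1 … A j` is the partially averaged state `ω̃_{K-j}(A)`:
`ω̃_K = ω` and `ω̃_{a-1}(·) = E_a (f_a ω̃_a(·))`. -/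
def omT1 (N K : ℕ) (β h t : ℝ) (q m : ℕ → ℝ) (A : (Fin N → Bool) → ℝ) :
    ℕ → (Fin N → Fin N → ℝ) → (Fin K → Fin N → ℝ) → ℝ
  | 0 => gibbs N K β h t q A
  | j + 1 => fun Jc Js =>
      if hj : j < K then
        ∫ g : Fin N → ℝ,
          fWeight N K β h t q m (K - j) Jc (Function.update Js ⟨K - 1 - j, by omega⟩ g) *
            omT1 N K β h t q m A j Jc (Function.update Js ⟨K - 1 - j, by omega⟩ g)
          ∂gaussN N
      else omT1 N K β h t q m A j Jc Js

/-- `omT2 … A j` is the partially averaged two-replica state `Ω̃_{K-j}(A)`: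
`Ω̃_K = Ω` and `Ω̃_{a-1}(·) = E_a (f_a Ω̃_a(·))`. -/
def omT2 (N K : ℕ) (β h t : ℝ) (q m : ℕ → ℝ) (A : (Fin N → Bool) → (Fin N → Bool) → ℝ) :
    ℕ → (Fin N → Fin N → ℝ) → (Fin K → Fin N → ℝ) → ℝ
  | 0 => gibbs2 N K β h t q A
  | j + 1 => fun Jc Js =>
      if hj : j < K then
        ∫ g : Fin N → ℝ,
          fWeight N K β h t q m (K - j) Jc (Function.update Js ⟨K - 1 - j, by omega⟩ g) *
            omT2 N K β h t q m A j Jc (Function.update Js ⟨K - 1 - j, by omega⟩ g)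
          ∂gaussN N
      else omT2 N K β h t q m A j Jc Js

/-- The deformed quenched average `⟨A⟩_a = E(f_1 ⋯ f_a Ω̃_a(A))` at interpolation
parameter `t`, for a function `A` of two replicas. -/
def angA (N K : ℕ) (β h t : ℝ) (q m : ℕ → ℝ) (a : ℕ)
    (A : (Fin N → Bool) → (Fin N → Bool) → ℝ) : ℝ :=
  ∫ Jc, ∫ Js,
      (∏ b ∈ Finset.Icc 1 a, fWeight N K β h t q m b Jc Js) *
        omT2 N K β h t q m A (K - a) Jc Js
    ∂gaussS K N ∂gaussC N

/-! ## Zero temperature (ground state) objects -/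

/-- The zero-temperature Parisi recursion: `parisiLevelBar K q m j` is `f̄(q_{K-j}, ·; x̄)`,
with final condition `f̄(q_K, y) = |y|`. -/
def parisiLevelBar (K : ℕ) (q m : ℕ → ℝ) : ℕ → ℝ → ℝ
  | 0 => fun y => |y|
  | j + 1 => pStep (m (K - j)) (q (K - j) - q (K - j - 1)) (parisiLevelBar K q m j)

/-- A zero-temperature piecewise constant order parameter: nodes
`0 = q_0 ≤ … ≤ q_K = 1` and nondecreasing values `0 ≤ m̄_1 ≤ … ≤ m̄_K`
(no upper bound `1`), with the convention `m̄_0 = 0`. -/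
structure ZeroTParam where
  K : ℕ
  hK : 1 ≤ K
  q : ℕ → ℝ
  m : ℕ → ℝ
  hq0 : q 0 = 0
  hqK : q K = 1
  hq_mono : ∀ a, a < K → q a ≤ q (a + 1)
  hm0 : m 0 = 0
  hm1 : 0 ≤ m 1
  hm_mono : ∀ a, 1 ≤ a → a < K → m a ≤ m (a + 1)

/-- The zero-temperature trial function `α̃(h; x̄) = f̄(0, h; x̄) - (1/2) ∫₀¹ r x̄(r) dr`. -/
def gsTrial (K : ℕ) (q m : ℕ → ℝ) (h : ℝ) : ℝ :=
  parisiLevelBar K q m K h - 1 / 2 * ∫ r in (0 : ℝ)..1, r * xFun K q m r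

/-! ## The p-spin model -/

/-- A piecewise constant functional order parameter on `[0, p/2]`:
`0 = q_0 ≤ … ≤ q_K = p/2` and `0 ≤ m_1 ≤ … ≤ m_K ≤ 1`. -/
structure POrderParam (p : ℕ) where
  K : ℕ
  hK : 1 ≤ K
  q : ℕ → ℝ
  m : ℕ → ℝ
  hq0 : q 0 = 0
  hqK : q K = p / 2
  hq_mono : ∀ a, a < K → q a ≤ q (a + 1)
  hm1 : 0 ≤ m 1
  hm_mono : ∀ a, 1 ≤ a → a < K → m a ≤ m (a + 1)
  hmK : m K ≤ 1

/-- The p-spin Hamiltonian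
`H_N(σ,h,J) = -(p!/(2N^{p-1}))^{1/2} ∑_{i_1<…<i_p} J_{i_1…i_p} σ_{i_1}⋯σ_{i_p} - h ∑_i σ_i`. -/
def hamP (p N : ℕ) (h : ℝ) (J : Finset (Fin N) → ℝ) (σ : Fin N → Bool) : ℝ :=
  -Real.sqrt ((Nat.factorial p : ℝ) / (2 * (N : ℝ) ^ (p - 1))) *
      ∑ S ∈ Finset.powersetCard p (Finset.univ : Finset (Fin N)), J S * ∏ i ∈ S, spin (σ i)
    - h * ∑ i, spin (σ i)

/-- The p-spin partition function. -/
def ZP (p N : ℕ) (β h : ℝ) (J : Finset (Fin N) → ℝ) : ℝ :=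
  ∑ σ : Fin N → Bool, Real.exp (-(β * hamP p N h J σ))

/-- The p-spin quenched average `N⁻¹ E log Z_N^{(p)}(β, h, J)`. -/
def quenchedFEP (p N : ℕ) (β h : ℝ) : ℝ :=
  (N : ℝ)⁻¹ * ∫ J, Real.log (ZP p N β h J) ∂gaussP N

/-- The functional order parameter on `[0, p/2]` as a function. -/
def xFunP (p K : ℕ) (q m : ℕ → ℝ) (r : ℝ) : ℝ :=
  if (p : ℝ) / 2 ≤ r then m K else m (sInf {a : ℕ | r < q a})

/-- The change of variables `q̄(r)` defined by `2r = p q̄^{p-1}`. -/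
def qBar (p : ℕ) (r : ℝ) : ℝ := (2 * r / p) ^ (((p : ℝ) - 1)⁻¹)

/-- The p-spin trial function
`ᾱ_p(β, h; x) = log 2 + f(0, h; x, β) - (β²/2) ∫₀^{p/2} q̄(r) x(r) dr`. -/
def trialAlphaP (p K : ℕ) (q m : ℕ → ℝ) (β h : ℝ) : ℝ :=
  Real.log 2 + parisiLevel K q m β K h
    - β ^ 2 / 2 * ∫ r in (0 : ℝ)..((p : ℝ) / 2), qBar p r * xFunP p K q m r

/-! ## Auxiliary lemmas -/

/-- Lipschitz functions with constant `L ≥ 0`. -/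
def PLip (L : ℝ) (g : ℝ → ℝ) : Prop := 0 ≤ L ∧ ∀ u v, g u ≤ g v + L * |u - v|

lemma PLip.continuous {L : ℝ} {g : ℝ → ℝ} (h : PLip L g) : Continuous g := by
  have : LipschitzWith (Real.toNNReal L) g := by
    apply LipschitzWith.of_dist_le_mul
    intro u v
    rw [Real.dist_eq, Real.dist_eq, Real.coe_toNNReal _ h.1, abs_le]
    have h1 := h.2 u v
    have h2 := h.2 v u
    rw [abs_sub_comm v u] at h2
    constructor <;> linarith
  exact this.continuous

lemma logcosh_lip {β : ℝ} (hβ : 0 ≤ β) : PLip β (fun y => Real.log (Real.cosh (β * y))) := by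
  refine ⟨hβ, fun u v => ?_⟩
  have hc := Real.cosh_pos (β * v)
  have key : Real.cosh (β * u) ≤ Real.cosh (β * v) * Real.exp (β * |u - v|) := by
    rw [Real.cosh_eq, Real.cosh_eq, div_mul_eq_mul_div, add_mul, ← Real.exp_add, ← Real.exp_add]
    have h1 : u - v ≤ |u - v| := le_abs_self _
    have h2 : -(u - v) ≤ |u - v| := neg_le_abs _
    have e1 : Real.exp (β * u) ≤ Real.exp (β * v + β * |u - v|) :=
      Real.exp_le_exp.2 (by nlinarith)
    have e2 : Real.exp (-(β * u)) ≤ Real.exp (-(β * v) + β * |u - v|) :=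
      Real.exp_le_exp.2 (by nlinarith)
    linarith
  have := Real.log_le_log (Real.cosh_pos _) key
  rwa [Real.log_mul hc.ne' (Real.exp_pos _).ne', Real.log_exp] at this

lemma int_exp {L m s y : ℝ} {g : ℝ → ℝ} (h : PLip L g) (hm : 0 ≤ m) :
    Integrable (fun z => Real.exp (m * g (y + z * Real.sqrt s))) stdGauss := by
  have hc := h.continuous
  have hb : Integrable (fun z : ℝ => Real.exp (m * L * Real.sqrt s * |z|)) stdGauss := by
    unfold stdGauss
    exact integrable_exp_mul_abs (X := fun z : ℝ => z)
      (integrable_exp_mul_gaussianReal _) (integrable_exp_mul_gaussianReal _)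
  refine (hb.const_mul (Real.exp (m * g y))).mono' (by fun_prop) (ae_of_all _ fun z => ?_)
  rw [Real.norm_eq_abs, Real.abs_exp, ← Real.exp_add]
  apply Real.exp_le_exp.2
  have := h.2 (y + z * Real.sqrt s) y
  rw [add_sub_cancel_left, abs_mul, abs_of_nonneg (Real.sqrt_nonneg s)] at this
  nlinarith

lemma int_lin {L s y : ℝ} {g : ℝ → ℝ} (h : PLip L g) :
    Integrable (fun z => g (y + z * Real.sqrt s)) stdGauss := by
  have hc := h.continuous
  have h' : PLip L (fun y => - g y) := ⟨h.1, fun u v => by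
    have := h.2 v u
    rw [abs_sub_comm] at this
    linarith⟩
  have h1 := int_exp (m := 1) (s := s) (y := y) h zero_le_one
  have h2 := int_exp (m := 1) (s := s) (y := y) h' zero_le_one
  refine (h1.add h2).mono' (by fun_prop) (ae_of_all _ fun z => ?_)
  simp only [Pi.add_apply, one_mul, Real.norm_eq_abs]
  generalize g (y + z * Real.sqrt s) = w
  have a1 := Real.add_one_le_exp w
  have a2 := Real.add_one_le_exp (-w)
  have a3 := Real.exp_pos w
  have a4 := Real.exp_pos (-w)
  rw [abs_le]
  constructor <;> linarith

lemma exp_int_pos {L m s y : ℝ} {g : ℝ → ℝ} (h : PLip L g) (hm : 0 ≤ m) :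
    0 < ∫ z, Real.exp (m * g (y + z * Real.sqrt s)) ∂stdGauss :=
  integral_exp_pos (int_exp h hm)

lemma exp_pStep {L m s y : ℝ} {g : ℝ → ℝ} (h : PLip L g) (hm : 0 < m) :
    Real.exp (m * pStep m s g y) = ∫ z, Real.exp (m * g (y + z * Real.sqrt s)) ∂stdGauss := by
  rw [pStep, if_neg hm.ne', mul_inv_cancel_left₀ hm.ne', Real.exp_log (exp_int_pos h hm.le)]

lemma pStep_zero_m (s y : ℝ) (g : ℝ → ℝ) :
    pStep 0 s g y = ∫ z, g (y + z * Real.sqrt s) ∂stdGauss := by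
  rw [pStep, if_pos rfl]

lemma pStep_zero_s (m : ℝ) (g : ℝ → ℝ) : pStep m 0 g = g := by
  funext y
  unfold pStep
  split_ifs with h
  · simp
  · simp [h]

/-- General comparison with a shift. -/
lemma pStep_le {L L' m s u v c : ℝ} {g g' : ℝ → ℝ} (h : PLip L g) (h' : PLip L' g') (hm : 0 ≤ m)
    (hle : ∀ z, g (u + z) ≤ g' (v + z) + c) : pStep m s g u ≤ pStep m s g' v + c := by
  rcases hm.eq_or_lt with rfl | hm
  · rw [pStep_zero_m, pStep_zero_m]
    calc ∫ z, g (u + z * Real.sqrt s) ∂stdGauss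
        ≤ ∫ z, (g' (v + z * Real.sqrt s) + c) ∂stdGauss :=
          integral_mono (int_lin h) ((int_lin h').add (integrable_const c)) (fun z => hle _)
      _ = _ := by rw [integral_add (int_lin h') (integrable_const c)]; simp
  · have key : Real.exp (m * pStep m s g u) ≤ Real.exp (m * (pStep m s g' v + c)) := by
      rw [mul_add, Real.exp_add, exp_pStep h hm, exp_pStep h' hm, ← integral_mul_const]
      refine integral_mono (int_exp h hm.le) ((int_exp h' hm.le).mul_const _) (fun z => ?_)
      dsimp only
      rw [← Real.exp_add]
      apply Real.exp_le_exp.2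
      have := hle (z * Real.sqrt s)
      nlinarith
    exact le_of_mul_le_mul_left (Real.exp_le_exp.1 key) hm

lemma pStep_lip {L m s : ℝ} {g : ℝ → ℝ} (h : PLip L g) (hm : 0 ≤ m) : PLip L (pStep m s g) := by
  refine ⟨h.1, fun u v => pStep_le h h hm fun z => ?_⟩
  have := h.2 (u + z) (v + z)
  rwa [add_sub_add_right_eq_sub] at this

lemma pStep_mono {L L' m s : ℝ} {g g' : ℝ → ℝ} (h : PLip L g) (h' : PLip L' g') (hm : 0 ≤ m)
    (hle : ∀ z, g z ≤ g' z) (y : ℝ) : pStep m s g y ≤ pStep m s g' y := by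
  have := pStep_le (s := s) (u := y) (v := y) (c := 0) h h' hm (fun z => by simpa using hle _)
  simpa using this

/-- Jensen: monotonicity in `m`. -/
lemma pStep_mono_m {L m m' s : ℝ} {g : ℝ → ℝ} (h : PLip L g) (hm : 0 ≤ m) (hmm : m ≤ m')
    (y : ℝ) : pStep m s g y ≤ pStep m' s g y := by
  rcases hmm.eq_or_lt with rfl | hlt
  · exact le_rfl
  have hm' : 0 < m' := hm.trans_lt hlt
  suffices key : Real.exp (m' * pStep m s g y) ≤ Real.exp (m' * pStep m' s g y) from
    le_of_mul_le_mul_left (Real.exp_le_exp.1 key) hm'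
  rw [exp_pStep h hm']
  rcases hm.eq_or_lt with rfl | hm
  · rw [pStep_zero_m, ← integral_const_mul]
    exact convexOn_exp.map_integral_le Real.continuous_exp.continuousOn isClosed_univ
      (by simp) ((int_lin h).const_mul _) (int_exp h hm'.le)
  · have e : ∀ w : ℝ, Real.exp (m' * w) = (Real.exp (m * w)) ^ (m' / m) := by
      intro w
      rw [← Real.exp_mul]
      congr 1
      field_simp
    rw [e, exp_pStep h hm]
    have hp : 1 ≤ m' / m := by rw [le_div_iff₀ hm]; linarith
    have hi : Integrable
        (fun z => (Real.exp (m * g (y + z * Real.sqrt s))) ^ (m' / m)) stdGauss := by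
      simp_rw [← e]
      exact int_exp h hm'.le
    have := (convexOn_rpow hp).map_integral_le
      (Real.continuous_rpow_const (by linarith)).continuousOn isClosed_Ici
      (ae_of_all stdGauss fun z => (Real.exp_pos (m * g (y + z * Real.sqrt s))).le)
      (int_exp h hm.le) hi
    simp_rw [e]
    exact this

lemma stdGauss_map (y : ℝ) {s : ℝ} (hs : 0 ≤ s) :
    stdGauss.map (fun z => y + z * Real.sqrt s) = gaussianReal y s.toNNReal := by
  have : (fun z => y + z * Real.sqrt s) = (fun z => y + z) ∘ (fun z => z * Real.sqrt s) := rfl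
  rw [this, ← Measure.map_map (by fun_prop) (by fun_prop), stdGauss, gaussianReal_map_mul_const,
    gaussianReal_map_const_add]
  congr 1
  · simp
  · ext
    simp [Real.sq_sqrt hs, Real.coe_toNNReal s hs]

lemma gauss_semigroup {s t y : ℝ} (hs : 0 ≤ s) (ht : 0 ≤ t) {h : ℝ → ℝ} (hc : Continuous h)
    (hi : Integrable (fun z => h (y + z * Real.sqrt (s + t))) stdGauss) :
    ∫ z, (∫ w, h (y + z * Real.sqrt s + w * Real.sqrt t) ∂stdGauss) ∂stdGauss =
      ∫ z, h (y + z * Real.sqrt (s + t)) ∂stdGauss := by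
  have hst : 0 ≤ s + t := add_nonneg hs ht
  have e3 : gaussianReal y (s + t).toNNReal =
      (gaussianReal y s.toNNReal) ∗ (gaussianReal 0 t.toNNReal) := by
    rw [gaussianReal_conv_gaussianReal, Real.toNNReal_add hs ht, add_zero]
  have hi' : Integrable h (gaussianReal y (s + t).toNNReal) := by
    rw [← stdGauss_map y hst, integrable_map_measure hc.aestronglyMeasurable (by fun_prop)]
    exact hi
  have e1 : ∫ z, h (y + z * Real.sqrt (s + t)) ∂stdGauss
      = ∫ u, h u ∂(gaussianReal y (s + t).toNNReal) := by
    rw [← stdGauss_map y hst, integral_map (by fun_prop) hc.aestronglyMeasurable]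
  have e2 : ∀ u, ∫ w, h (u + w * Real.sqrt t) ∂stdGauss
      = ∫ v, h (u + v) ∂(gaussianReal 0 t.toNNReal) := by
    intro u
    have hcu : Continuous (fun v => h (u + v)) := by fun_prop
    rw [← stdGauss_map 0 ht, integral_map (by fun_prop) hcu.aestronglyMeasurable]
    simp
  rw [e1, e3]
  rw [e3] at hi'
  rw [integral_conv hi']
  simp_rw [e2]
  have hmeas : StronglyMeasurable (fun u => ∫ v, h (u + v) ∂(gaussianReal 0 t.toNNReal)) :=
    StronglyMeasurable.integral_prod_right (f := fun u v => h (u + v))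
      (hc.comp (continuous_fst.add continuous_snd)).stronglyMeasurable
  rw [← stdGauss_map y hs, integral_map (by fun_prop) hmeas.aestronglyMeasurable]

lemma pStep_semigroup {L m s t : ℝ} {g : ℝ → ℝ} (h : PLip L g) (hm : 0 ≤ m)
    (hs : 0 ≤ s) (ht : 0 ≤ t) : pStep m s (pStep m t g) = pStep m (s + t) g := by
  funext y
  have hc := h.continuous
  rcases hm.eq_or_lt with rfl | hm
  · simp_rw [pStep_zero_m]
    exact gauss_semigroup hs ht hc (int_lin h)
  · have key : Real.exp (m * pStep m s (pStep m t g) y) = Real.exp (m * pStep m (s + t) g y) := by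
      rw [exp_pStep (pStep_lip h hm.le) hm, exp_pStep h hm]
      simp_rw [exp_pStep h hm]
      exact gauss_semigroup (h := fun u => Real.exp (m * g u)) hs ht (by fun_prop)
        (int_exp h hm.le)
    exact mul_left_cancel₀ hm.ne' (Real.exp_injective key)

namespace OrderParam

lemma q_mono (X : OrderParam) {a b : ℕ} (hab : a ≤ b) (hb : b ≤ X.K) : X.q a ≤ X.q b := by
  induction b, hab using Nat.le_induction with
  | base => exact le_rfl
  | succ n hn ih => exact (ih (by omega)).trans (X.hq_mono n (by omega))

lemma m_nonneg (X : OrderParam) {a : ℕ} (ha : 1 ≤ a) (hb : a ≤ X.K) : 0 ≤ X.m a := by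
  induction a, ha using Nat.le_induction with
  | base => exact X.hm1
  | succ n hn ih => exact (ih (by omega)).trans (X.hm_mono n hn (by omega))

lemma level_lip (X : OrderParam) {β : ℝ} (hβ : 0 ≤ β) {j : ℕ} (hj : j ≤ X.K) :
    PLip β (parisiLevel X.K X.q X.m β j) := by
  induction j with
  | zero => exact logcosh_lip hβ
  | succ n ih => exact pStep_lip (ih (by omega)) (X.m_nonneg (by omega) (by omega))

lemma level_pred (X : OrderParam) (β : ℝ) {c : ℕ} (h1 : 1 ≤ c) (hc : c ≤ X.K) :
    parisiLevel X.K X.q X.m β (X.K - (c - 1)) =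
      pStep (X.m c) (X.q c - X.q (c - 1)) (parisiLevel X.K X.q X.m β (X.K - c)) := by
  have e : X.K - (c - 1) = (X.K - c) + 1 := by omega
  have e2 : X.K - (X.K - c) = c := by omega
  rw [e, parisiLevel, e2]

lemma level_const (X : OrderParam) (β : ℝ) {a b : ℕ} (hab : a ≤ b) (hb : b ≤ X.K)
    (hq : X.q a = X.q b) :
    parisiLevel X.K X.q X.m β (X.K - a) = parisiLevel X.K X.q X.m β (X.K - b) := by
  induction b, hab using Nat.le_induction with
  | base => rfl
  | succ n hn ih =>
    have h1 := X.q_mono hn (by omega)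
    have h2 := X.hq_mono n (by omega)
    rw [ih (by omega) (by linarith)]
    have := X.level_pred β (c := n + 1) (by omega) hb
    rw [Nat.add_sub_cancel] at this
    rw [this, show X.q (n + 1) - X.q n = 0 by linarith, pStep_zero_s]

/-- The Parisi function as one step from any node at the right end of its interval. -/
lemma parisiF_eq (X : OrderParam) (β : ℝ) {r : ℝ} {c : ℕ} (h1 : 1 ≤ c) (hc : c ≤ X.K)
    (hl : X.q (c - 1) ≤ r) (hr : r ≤ X.q c) :
    parisiF X.K X.q X.m β r =
      pStep (X.m c) (X.q c - r) (parisiLevel X.K X.q X.m β (X.K - c)) := by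
  funext y
  unfold parisiF
  have hmem : sInf {a : ℕ | r ≤ X.q a} ∈ {a : ℕ | r ≤ X.q a} := Nat.sInf_mem ⟨c, hr⟩
  have hle : sInf {a : ℕ | r ≤ X.q a} ≤ c := Nat.sInf_le hr
  generalize sInf {a : ℕ | r ≤ X.q a} = d at hmem hle
  have hmem' : r ≤ X.q d := hmem
  rcases hle.eq_or_lt with rfl | hlt
  · rfl
  · have h2 := X.q_mono (a := d) (b := c - 1) (by omega) (by omega)
    rw [show X.q d - r = 0 by linarith, pStep_zero_s,
      X.level_const β (a := d) (b := c - 1) (by omega) (by omega) (by linarith),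
      X.level_pred β h1 hc, show X.q (c - 1) = r by linarith]

/-- Index of the interval containing `r`. -/
def idx (X : OrderParam) (r : ℝ) : ℕ := sInf {a : ℕ | r < X.q a}

lemma idx_spec (X : OrderParam) {r : ℝ} (h0 : 0 ≤ r) (h1 : r < 1) :
    1 ≤ X.idx r ∧ X.idx r ≤ X.K ∧ X.q (X.idx r - 1) ≤ r ∧ r < X.q (X.idx r) := by
  have hK : X.K ∈ {a : ℕ | r < X.q a} := by
    show r < X.q X.K
    rw [X.hqK]; exact h1
  have hmem : r < X.q (X.idx r) := Nat.sInf_mem ⟨_, hK⟩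
  have hle : X.idx r ≤ X.K := Nat.sInf_le hK
  have hpos : 1 ≤ X.idx r := by
    by_contra hcon
    have : X.idx r = 0 := by omega
    rw [this, X.hq0] at hmem
    linarith
  refine ⟨hpos, hle, ?_, hmem⟩
  by_contra hcon
  have : X.idx r ≤ X.idx r - 1 := Nat.sInf_le (not_le.1 hcon)
  omega

lemma idx_mono (X : OrderParam) {r r' : ℝ} (h0 : 0 ≤ r) (hrr : r ≤ r') (h1 : r' < 1) :
    X.idx r ≤ X.idx r' :=
  Nat.sInf_le (hrr.trans_lt (X.idx_spec (h0.trans hrr) h1).2.2.2)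

lemma idx_lt (X : OrderParam) {r r' : ℝ} (h0 : 0 ≤ r) (hrr : r ≤ r') (h1 : r' < 1)
    (h : r' = X.q (X.idx r)) : X.idx r < X.idx r' := by
  rcases (X.idx_mono h0 hrr h1).eq_or_lt with he | hlt
  · have := (X.idx_spec (h0.trans hrr) h1).2.2.2
    rw [← he, ← h] at this
    exact absurd this (lt_irrefl _)
  · exact hlt

lemma parisiF_step (X : OrderParam) {β : ℝ} (hβ : 0 ≤ β) {r r' : ℝ} (h0 : 0 ≤ r) (h1 : r < 1)
    (hrr : r ≤ r') (hr' : r' ≤ X.q (X.idx r)) :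
    parisiF X.K X.q X.m β r =
      pStep (X.m (X.idx r)) (r' - r) (parisiF X.K X.q X.m β r') := by
  obtain ⟨a1, a2, a3, a4⟩ := X.idx_spec h0 h1
  rw [X.parisiF_eq β a1 a2 a3 a4.le, X.parisiF_eq β a1 a2 (a3.trans hrr) hr',
    pStep_semigroup (X.level_lip hβ (by omega)) (X.m_nonneg a1 a2) (by linarith) (by linarith)]
  congr 1
  ring

lemma parisiF_one (X : OrderParam) (β : ℝ) :
    parisiF X.K X.q X.m β 1 = fun y => Real.log (Real.cosh (β * y)) := by
  have hK := X.hK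
  have hl : X.q (X.K - 1) ≤ 1 := by
    rw [← X.hqK]; exact X.q_mono (by omega) le_rfl
  rw [X.parisiF_eq β hK le_rfl hl X.hqK.ge, X.hqK, sub_self, pStep_zero_s, Nat.sub_self]
  rfl

lemma parisiF_lip (X : OrderParam) {β : ℝ} (hβ : 0 ≤ β) {r : ℝ} (h0 : 0 ≤ r) (h1 : r ≤ 1) :
    PLip β (parisiF X.K X.q X.m β r) := by
  rcases h1.eq_or_lt with rfl | h1
  · rw [X.parisiF_one]; exact logcosh_lip hβ
  · obtain ⟨a1, a2, a3, a4⟩ := X.idx_spec h0 h1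
    rw [X.parisiF_eq β a1 a2 a3 a4.le]
    exact pStep_lip (X.level_lip hβ (by omega)) (X.m_nonneg a1 a2)

lemma xFun_eq (X : OrderParam) {r : ℝ} (h1 : r < 1) : xFun X.K X.q X.m r = X.m (X.idx r) := by
  rw [xFun, if_neg (not_le.2 h1), idx]

lemma mono_aux (X Y : OrderParam) {β : ℝ} (hβ : 0 ≤ β)
    (hle : ∀ r ∈ Set.Icc (0 : ℝ) 1, xFun X.K X.q X.m r ≤ xFun Y.K Y.q Y.m r) (n : ℕ) :
    ∀ r, 0 ≤ r → r < 1 → (X.K - X.idx r) + (Y.K - Y.idx r) = n → ∀ y : ℝ,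
      parisiF X.K X.q X.m β r y ≤ parisiF Y.K Y.q Y.m β r y := by
  induction n using Nat.strong_induction_on with
  | _ n ih =>
    intro r h0 h1 hn y
    obtain ⟨a1, a2, a3, a4⟩ := X.idx_spec h0 h1
    obtain ⟨b1, b2, b3, b4⟩ := Y.idx_spec h0 h1
    have hm := hle r ⟨h0, h1.le⟩
    rw [X.xFun_eq h1, Y.xFun_eq h1] at hm
    obtain ⟨r', hr'⟩ : ∃ r', r' = min (X.q (X.idx r)) (Y.q (Y.idx r)) := ⟨_, rfl⟩
    have hrr : r ≤ r' := by rw [hr']; exact le_min a4.le b4.le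
    have hX : r' ≤ X.q (X.idx r) := by rw [hr']; exact min_le_left _ _
    have hY : r' ≤ Y.q (Y.idx r) := by rw [hr']; exact min_le_right _ _
    have hr1 : r' ≤ 1 := hX.trans (by rw [← X.hqK]; exact X.q_mono a2 le_rfl)
    have hr0 : 0 ≤ r' := h0.trans hrr
    have hnext : ∀ y, parisiF X.K X.q X.m β r' y ≤ parisiF Y.K Y.q Y.m β r' y := by
      rcases hr1.eq_or_lt with h | hlt
      · intro y
        rw [h, X.parisiF_one, Y.parisiF_one]
      · have x1 := X.idx_mono h0 hrr hlt
        have y1 := Y.idx_mono h0 hrr hlt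
        have x2 := (X.idx_spec hr0 hlt).2.1
        have y2 := (Y.idx_spec hr0 hlt).2.1
        refine ih _ ?_ r' hr0 hlt rfl
        rcases min_choice (X.q (X.idx r)) (Y.q (Y.idx r)) with h | h
        · have := X.idx_lt h0 hrr hlt (hr'.trans h)
          omega
        · have := Y.idx_lt h0 hrr hlt (hr'.trans h)
          omega
    rw [X.parisiF_step hβ h0 h1 hrr hX, Y.parisiF_step hβ h0 h1 hrr hY]
    exact (pStep_mono (X.parisiF_lip hβ hr0 hr1) (Y.parisiF_lip hβ hr0 hr1)
      (X.m_nonneg a1 a2) hnext y).trans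
      (pStep_mono_m (Y.parisiF_lip hβ hr0 hr1) (X.m_nonneg a1 a2) hm y)

end OrderParam

/-- monotonicity of the Parisi function in the functional order parameter:
if `x(r) ≤ x̄(r)` for all `r ∈ [0,1]`, then `f(r, y; x, β) ≤ f(r, y; x̄, β)`
for every `r ∈ [0,1]`, `y ∈ ℝ` and `β ≥ 0`. -/
theorem parisiF_mono (X Y : OrderParam) (β : ℝ) (hβ : 0 ≤ β)
    (hle : ∀ r ∈ Set.Icc (0 : ℝ) 1, xFun X.K X.q X.m r ≤ xFun Y.K Y.q Y.m r) :
    ∀ r ∈ Set.Icc (0 : ℝ) 1, ∀ y : ℝ,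
      parisiF X.K X.q X.m β r y ≤ parisiF Y.K Y.q Y.m β r y := by
  intro r hr y
  rcases hr.2.eq_or_lt with h | h
  · rw [h, X.parisiF_one, Y.parisiF_one]
  · exact OrderParam.mono_aux X Y hβ hle _ r hr.1 h rfl y

end
end

section
/- Let g : ℝ → ℝ be a smooth function with bounded first and second derivatives, let q* ∈ (0,1] and m > 0. Define, for q < q* and y ∈ ℝ, F(q,y) = (1/m) log ∫ exp(m g(y + z√(q* − q))) dμ(z), where μ is the standard Gaussian measure on ℝ. Then F satisfies the antiparabolic equation ∂_q F(q,y) + (1/2)(∂²_y F(q,y) + m (∂_y F(q,y))²) = 0 for q < q*, with F(q,y) → g(y) as q → q*. Moreover, if instead m = 0 and F(q,y) = ∫ g(y + z√(q* − q)) dμ(z), then ∂_q F(q,y) + (1/2) ∂²_y F(q,y) = 0 with the same final condition. -/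
open MeasureTheory ProbabilityTheory Filter

noncomputable section

/-- Continuous with at most exponential growth. -/
def ExpB (H : ℝ → ℝ) : Prop :=
  Continuous H ∧ ∃ A B : ℝ, 0 ≤ A ∧ 0 ≤ B ∧ ∀ x, |H x| ≤ A * Real.exp (B * |x|)

lemma integrable_exp_abs_std (B : ℝ) : Integrable (fun z : ℝ => Real.exp (B * |z|)) stdGauss :=
  integrable_exp_mul_abs (X := fun z : ℝ => z) (integrable_exp_mul_gaussianReal B)
    (integrable_exp_mul_gaussianReal (-B))

lemma ExpB.integrable {H : ℝ → ℝ} (h : ExpB H) : Integrable H stdGauss := by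
  obtain ⟨hc, A, B, hA, hB, hb⟩ := h
  refine Integrable.mono' ((integrable_exp_abs_std B).const_mul A)
    hc.aestronglyMeasurable (Eventually.of_forall fun x => ?_)
  simpa using hb x

lemma ExpB.mul {H G : ℝ → ℝ} (h : ExpB H) (k : ExpB G) : ExpB (fun x => H x * G x) := by
  obtain ⟨hc, A, B, hA, hB, hb⟩ := h
  obtain ⟨kc, A', B', hA', hB', kb⟩ := k
  refine ⟨hc.mul kc, A * A', B + B', by positivity, by positivity, fun x => ?_⟩
  rw [abs_mul, add_mul, Real.exp_add]
  calc |H x| * |G x| ≤ (A * Real.exp (B * |x|)) * (A' * Real.exp (B' * |x|)) :=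
        mul_le_mul (hb x) (kb x) (abs_nonneg _) (by positivity)
    _ = _ := by ring

lemma ExpB.of_bdd {H : ℝ → ℝ} (hc : Continuous H) (A : ℝ) (hA : ∀ x, |H x| ≤ A) : ExpB H :=
  ⟨hc, A, 0, (abs_nonneg _).trans (hA 0), le_rfl, fun x => by simpa using hA x⟩

lemma ExpB.id : ExpB (fun x => x) :=
  ⟨continuous_id, 1, 1, by norm_num, by norm_num, fun x => by
    have := Real.add_one_le_exp |x|
    simp only [one_mul]; linarith⟩

lemma ExpB.affine {H : ℝ → ℝ} (h : ExpB H) (a b : ℝ) : ExpB (fun z => H (a + z * b)) := by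
  obtain ⟨hc, A, B, hA, hB, hb⟩ := h
  refine ⟨hc.comp (by fun_prop), A * Real.exp (B * |a|), B * |b|, by positivity, by positivity,
    fun x => (hb _).trans ?_⟩
  rw [mul_assoc, ← Real.exp_add]
  gcongr
  calc B * |a + x * b| ≤ B * (|a| + |x * b|) := by gcongr; exact abs_add_le _ _
    _ = _ := by rw [abs_mul]; ring

lemma hasDerivAt_gauss {H H' : ℝ → ℝ} (hH : ∀ x, HasDerivAt H (H' x) x) (h : ExpB H)
    (h' : ExpB H') (a b p q t₀ : ℝ) :
    HasDerivAt (fun t => ∫ z, H (a + t * p + z * (b + t * q)) ∂stdGauss)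
      (∫ z, H' (a + t₀ * p + z * (b + t₀ * q)) * (p + z * q) ∂stdGauss) t₀ := by
  have h'0 := h'
  obtain ⟨hc', A, B, hA, hB, hb⟩ := h'
  set R : ℝ := |a| + |b| + (|t₀| + 1) * (|p| + |q|) with hR
  have hR0 : 0 ≤ R := by positivity
  have hpq : |p| + |q| ≤ R := by
    have h1 : 0 ≤ |t₀| * (|p| + |q|) := by positivity
    have h2 := abs_nonneg a
    have h3 := abs_nonneg b
    rw [hR]; linarith
  refine (hasDerivAt_integral_of_dominated_loc_of_deriv_le (μ := stdGauss)
    (F := fun t z => H (a + t * p + z * (b + t * q)))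
    (F' := fun t z => H' (a + t * p + z * (b + t * q)) * (p + z * q))
    (bound := fun z => (A * Real.exp (B * R) * R) * Real.exp ((B * R + 1) * |z|))
    (Metric.ball_mem_nhds t₀ one_pos) ?_ ?_ ?_ ?_ ?_ ?_).2
  · exact Eventually.of_forall fun t => (h.affine _ _).1.aestronglyMeasurable
  · exact (h.affine _ _).integrable
  · exact Continuous.aestronglyMeasurable (by fun_prop)
  · refine Eventually.of_forall fun z t ht => ?_
    have ht1 : |t| ≤ |t₀| + 1 := by
      rw [Metric.mem_ball, Real.dist_eq] at ht
      have := abs_sub_abs_le_abs_sub t t₀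
      linarith
    have e1 : |a + t * p + z * (b + t * q)| ≤ R * (1 + |z|) := by
      have i1 : |a + t * p + z * (b + t * q)| ≤ |a| + |t| * |p| + |z| * (|b| + |t| * |q|) := by
        refine (abs_add_le _ _).trans (add_le_add ((abs_add_le _ _).trans ?_) ?_)
        · rw [abs_mul]
        · rw [abs_mul]
          gcongr
          refine (abs_add_le _ _).trans ?_
          rw [abs_mul]
      have i2 : |t| * |p| ≤ (|t₀| + 1) * |p| := by gcongr
      have i3 : |t| * |q| ≤ (|t₀| + 1) * |q| := by gcongr
      have i4 : |z| * (|b| + |t| * |q|) ≤ |z| * R := by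
        gcongr
        have : 0 ≤ (|t₀| + 1) * |p| := by positivity
        have := abs_nonneg a
        rw [hR]; linarith
      have i5 : |a| + |t| * |p| ≤ R := by
        have : 0 ≤ (|t₀| + 1) * |q| := by positivity
        have := abs_nonneg b
        rw [hR]; linarith
      linarith
    have e2 : |p + z * q| ≤ R * (1 + |z|) := by
      have j1 : |p + z * q| ≤ |p| + |z| * |q| := (abs_add_le _ _).trans (by rw [abs_mul])
      have j2 : |z| * |q| ≤ |z| * R := by
        gcongr
        have := abs_nonneg p
        linarith
      have := abs_nonneg q
      linarith
    have e3 : 1 + |z| ≤ Real.exp |z| := by linarith [Real.add_one_le_exp |z|]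
    rw [Real.norm_eq_abs, abs_mul]
    calc _ ≤ (A * Real.exp (B * (R * (1 + |z|)))) * (R * Real.exp |z|) := by
          refine mul_le_mul ((hb _).trans ?_) (e2.trans ?_) (abs_nonneg _) (by positivity)
          · gcongr
          · gcongr
      _ = _ := by
          rw [show B * (R * (1 + |z|)) = B * R + B * R * |z| by ring,
            show (B * R + 1) * |z| = B * R * |z| + |z| by ring, Real.exp_add, Real.exp_add]
          ring
  · exact (integrable_exp_abs_std _).const_mul _
  · refine Eventually.of_forall fun z t _ => ?_
    refine (hH (a + t * p + z * (b + t * q))).comp t ?_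
    have k1 : HasDerivAt (fun t : ℝ => a + t * p) (1 * p) t :=
      ((hasDerivAt_id t).mul_const p).const_add a
    have k2 : HasDerivAt (fun t : ℝ => z * (b + t * q)) (z * (1 * q)) t :=
      (((hasDerivAt_id t).mul_const q).const_add b).const_mul z
    rw [show p + z * q = 1 * p + z * (1 * q) by ring]
    exact k1.add k2

lemma integrable_pdf_mul {f : ℝ → ℝ} (hf : Integrable f stdGauss) :
    Integrable (fun x => gaussianPDFReal 0 1 x * f x) := by
  unfold stdGauss at hf
  rw [gaussianReal_of_var_ne_zero _ one_ne_zero,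
    integrable_withDensity_iff_integrable_smul' (measurable_gaussianPDF _ _)
      (ae_of_all _ fun _ => gaussianPDF_lt_top)] at hf
  simpa [toReal_gaussianPDF] using hf

lemma hasDerivAt_pdf (x : ℝ) :
    HasDerivAt (gaussianPDFReal 0 1) (-(x * gaussianPDFReal 0 1 x)) x := by
  rw [gaussianPDFReal_def]
  have h1 : HasDerivAt (fun x : ℝ => -(x - 0) ^ 2 / (2 * ((1 : NNReal) : ℝ))) (-x) x := by
    have := ((((hasDerivAt_id x).sub_const 0).pow 2).neg).div_const (2 * ((1 : NNReal) : ℝ))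
    refine (this.congr_deriv ?_)
    simp
    ring
  refine (h1.exp.const_mul _).congr_deriv ?_
  ring

lemma stein {f f' : ℝ → ℝ} (hf : ∀ x, HasDerivAt f (f' x) x) (h : ExpB f) (h' : ExpB f') :
    ∫ z, f z * z ∂stdGauss = ∫ z, f' z ∂stdGauss := by
  have key := integral_mul_deriv_eq_deriv_mul_of_integrable
    (u := f) (v := gaussianPDFReal 0 1) (u' := f')
    (v' := fun x => -(x * gaussianPDFReal 0 1 x)) (fun x _ => hf x) (fun x _ => hasDerivAt_pdf x)
    (by
      refine ((integrable_pdf_mul (h.mul ExpB.id).integrable).neg).congr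
        (Eventually.of_forall fun x => ?_)
      simp only [Pi.neg_apply, Pi.mul_apply]; ring)
    (by
      refine (integrable_pdf_mul h'.integrable).congr (Eventually.of_forall fun x => ?_)
      simp only [Pi.mul_apply]; ring)
    (by
      refine (integrable_pdf_mul h.integrable).congr (Eventually.of_forall fun x => ?_)
      simp only [Pi.mul_apply]; ring)
  unfold stdGauss
  rw [integral_gaussianReal_eq_integral_smul one_ne_zero,
    integral_gaussianReal_eq_integral_smul one_ne_zero]
  simp only [smul_eq_mul]
  have e1 : ∫ x, f x * -(x * gaussianPDFReal 0 1 x)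
      = -∫ x, gaussianPDFReal 0 1 x * (f x * x) := by
    rw [← integral_neg]; congr 1; ext x; ring
  have e2 : ∫ x, f' x * gaussianPDFReal 0 1 x = ∫ x, gaussianPDFReal 0 1 x * f' x := by
    congr 1; ext x; ring
  rw [e1, e2] at key
  linarith

/-- Gaussian smoothing. -/
def gSm (H : ℝ → ℝ) (s y : ℝ) : ℝ := ∫ z, H (y + z * Real.sqrt s) ∂stdGauss

lemma gSm_dy {H H' : ℝ → ℝ} (hH : ∀ x, HasDerivAt H (H' x) x) (h : ExpB H)
    (h' : ExpB H') (s y : ℝ) : HasDerivAt (fun y => gSm H s y) (gSm H' s y) y := by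
  have := hasDerivAt_gauss hH h h' 0 (Real.sqrt s) 1 0 y
  simpa [gSm] using this

lemma gSm_ds {H H' H'' : ℝ → ℝ} (hH : ∀ x, HasDerivAt H (H' x) x)
    (hH' : ∀ x, HasDerivAt H' (H'' x) x) (h : ExpB H) (h' : ExpB H') (h'' : ExpB H'')
    (s y : ℝ) (hs : 0 < s) :
    HasDerivAt (fun s => gSm H s y) (1 / 2 * gSm H'' s y) s := by
  have h1 := hasDerivAt_gauss hH h h' y 0 0 1 (Real.sqrt s)
  have h2 := h1.comp s (Real.hasDerivAt_sqrt hs.ne')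
  have hst := stein (f := fun z => H' (y + z * Real.sqrt s))
    (f' := fun z => H'' (y + z * Real.sqrt s) * Real.sqrt s)
    (fun z => by
      refine (hH' (y + z * Real.sqrt s)).comp z ?_
      simpa using ((hasDerivAt_id z).mul_const (Real.sqrt s)).const_add y)
    (h'.affine _ _) ((h''.affine _ _).mul (ExpB.of_bdd continuous_const _ fun _ => le_rfl))
  rw [integral_mul_const] at hst
  have h3 : (fun s => gSm H s y) =
      (fun t => ∫ z, H (y + t * 0 + z * (0 + t * 1)) ∂stdGauss) ∘ Real.sqrt := by
    ext s; simp [gSm]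
  rw [h3]
  refine h2.congr_deriv ?_
  simp only [mul_zero, add_zero, mul_one, zero_add]
  rw [hst]
  have : Real.sqrt s ≠ 0 := (Real.sqrt_pos.2 hs).ne'
  simp only [gSm]
  generalize ∫ a, H'' (y + a * Real.sqrt s) ∂stdGauss = I
  field_simp

lemma gSm_cont {H H' : ℝ → ℝ} (hH : ∀ x, HasDerivAt H (H' x) x) (h : ExpB H)
    (h' : ExpB H') (y : ℝ) : Continuous (fun s => gSm H s y) := by
  have h3 : (fun s => gSm H s y) =
      (fun t => ∫ z, H (y + t * 0 + z * (0 + t * 1)) ∂stdGauss) ∘ Real.sqrt := by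
    ext s; simp [gSm]
  rw [h3]
  refine Continuous.comp ?_ Real.continuous_sqrt
  exact continuous_iff_continuousAt.2 fun t =>
    (hasDerivAt_gauss hH h h' y 0 0 1 t).continuousAt

lemma gSm_zero (H : ℝ → ℝ) (y : ℝ) : gSm H 0 y = H y := by simp [gSm]

lemma gSm_pos {H : ℝ → ℝ} (h : ExpB H) (hp : ∀ x, 0 < H x) (s y : ℝ) : 0 < gSm H s y := by
  unfold gSm
  rw [integral_pos_iff_support_of_nonneg (fun z => (hp _).le) (h.affine _ _).integrable]
  have : Function.support (fun z => H (y + z * Real.sqrt s)) = Set.univ := by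
    ext z; simpa using (hp _).ne'
  rw [this]; simp

/-- one step of the Parisi recursion solves the antiparabolic equation:
for smooth `g` with bounded first and second derivatives, `q* ∈ (0,1]` and `m ≥ 0`,
the function `F(r, y) = pStep m (q* − r) g y` (which is
`(1/m) log ∫ exp(m g(y + z√(q*−r))) dμ(z)` for `m > 0`, and
`∫ g(y + z√(q*−r)) dμ(z)` for `m = 0`) satisfies
`∂_r F + (1/2)(∂²_y F + m (∂_y F)²) = 0` for `r < q*`, and `F(r, y) → g(y)` as `r → q*⁻`. -/
theorem pStep_antiparabolic (g : ℝ → ℝ) (hg : ContDiff ℝ (⊤ : ℕ∞) g)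
    (C : ℝ) (hC : ∀ y : ℝ, |deriv g y| ≤ C ∧ |deriv (deriv g) y| ≤ C)
    (qstar m : ℝ) (hq : qstar ∈ Set.Ioc (0 : ℝ) 1) (hm : 0 ≤ m) :
    (∀ r : ℝ, r < qstar → ∀ y : ℝ,
        deriv (fun r' => pStep m (qstar - r') g y) r
          + 1 / 2 * (deriv (deriv (fun y' => pStep m (qstar - r) g y')) y
              + m * (deriv (fun y' => pStep m (qstar - r) g y') y) ^ 2) = 0)
    ∧ (∀ y : ℝ, Tendsto (fun r => pStep m (qstar - r) g y)
        (nhdsWithin qstar (Set.Iio qstar)) (nhds (g y))) := by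
  have hgd : ∀ x, HasDerivAt g (deriv g x) x := fun x =>
    ((hg.differentiable (by simp)) x).hasDerivAt
  have hg1 : ContDiff ℝ (⊤ : ℕ∞) (deriv g) := (contDiff_infty_iff_deriv.1 hg).2
  have hg2 : ContDiff ℝ (⊤ : ℕ∞) (deriv (deriv g)) := (contDiff_infty_iff_deriv.1 hg1).2
  have hgd' : ∀ x, HasDerivAt (deriv g) (deriv (deriv g) x) x := fun x =>
    ((hg1.differentiable (by simp)) x).hasDerivAt
  have hC0 : 0 ≤ C := (abs_nonneg _).trans (hC 0).1
  have b1 : ExpB (deriv g) := ExpB.of_bdd hg1.continuous C fun x => (hC x).1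
  have b2 : ExpB (deriv (deriv g)) := ExpB.of_bdd hg2.continuous C fun x => (hC x).2
  have hlin : ∀ x, |g x| ≤ |g 0| + C * |x| := by
    intro x
    have := Convex.norm_image_sub_le_of_norm_deriv_le (f := g) (s := Set.univ) (x := 0) (y := x)
      (C := C) (fun x _ => (hgd x).differentiableAt) (fun x _ => (hC x).1) convex_univ
      (Set.mem_univ _) (Set.mem_univ _)
    simp only [Real.norm_eq_abs, sub_zero] at this
    have := abs_sub_abs_le_abs_sub (g x) (g 0)
    linarith
  have hsub : ∀ r : ℝ, HasDerivAt (fun r' : ℝ => qstar - r') (-1) r := fun r => by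
    simpa using (hasDerivAt_id r).const_sub qstar
  by_cases hm0 : m = 0
  · subst hm0
    have b0 : ExpB g := by
      refine ⟨hg.continuous, |g 0| + 1, C, by positivity, hC0, fun x => (hlin x).trans ?_⟩
      have e1 := Real.add_one_le_exp (C * |x|)
      have e2 : 0 ≤ |g 0| * (C * |x|) := by positivity
      nlinarith [abs_nonneg (g 0)]
    have hP : ∀ s y, pStep 0 s g y = gSm g s y := fun s y => by simp [pStep, gSm]
    simp only [hP]
    refine ⟨fun r hr y => ?_, fun y => ?_⟩
    · have d1 := (gSm_ds hgd hgd' b0 b1 b2 (qstar - r) y (by linarith)).comp r (hsub r)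
      have d2 : deriv (fun y' => gSm g (qstar - r) y') = fun y' => gSm (deriv g) (qstar - r) y' :=
        funext fun y => (gSm_dy hgd b0 b1 _ y).deriv
      have d1' : deriv (fun r' => gSm g (qstar - r') y) r = _ := d1.deriv
      rw [d1', d2, (gSm_dy hgd' b1 b2 _ y).deriv]
      ring
    · have c := ((gSm_cont hgd b0 b1 y).comp (by fun_prop :
        Continuous fun r : ℝ => qstar - r)).tendsto qstar
      simp only [Function.comp_def, sub_self, gSm_zero] at c
      exact c.mono_left nhdsWithin_le_nhds
  · have hmp : 0 < m := lt_of_le_of_ne hm (Ne.symm hm0)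
    set H : ℝ → ℝ := fun x => Real.exp (m * g x) with hH
    set H1 : ℝ → ℝ := fun x => (m * deriv g x) * H x with hH1
    set H2 : ℝ → ℝ := fun x => (m * deriv (deriv g) x + (m * deriv g x) ^ 2) * H x with hH2
    have gc := hg.continuous
    have g1c := hg1.continuous
    have g2c := hg2.continuous
    have b0 : ExpB H := by
      refine ⟨by fun_prop, Real.exp (m * |g 0|), m * C, by positivity, by positivity,
        fun x => ?_⟩
      rw [hH, Real.abs_exp, ← Real.exp_add]
      refine Real.exp_le_exp.2 ?_
      have := (le_abs_self (g x)).trans (hlin x)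
      calc m * g x ≤ m * (|g 0| + C * |x|) := by gcongr
        _ = _ := by ring
    have b1' : ExpB H1 := by
      refine ExpB.mul (ExpB.of_bdd (by fun_prop) (m * C) fun x => ?_) b0
      rw [abs_mul, abs_of_pos hmp]
      have := (hC x).1
      gcongr
    have b2' : ExpB H2 := by
      refine ExpB.mul (ExpB.of_bdd (by fun_prop) (m * C + (m * C) ^ 2) fun x => ?_) b0
      refine (abs_add_le _ _).trans ?_
      rw [abs_pow, abs_mul, abs_mul, abs_of_pos hmp]
      have := (hC x).1
      have := (hC x).2
      gcongr
    have hd : ∀ x, HasDerivAt H (H1 x) x := fun x => by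
      refine ((hgd x).const_mul m).exp.congr_deriv ?_
      simp only [hH1, hH]; ring
    have hd' : ∀ x, HasDerivAt H1 (H2 x) x := fun x => by
      refine (((hgd' x).const_mul m).mul (hd x)).congr_deriv ?_
      simp only [hH2, hH1]; ring
    have hpos : ∀ s y, 0 < gSm H s y := gSm_pos b0 fun x => Real.exp_pos _
    have hP : ∀ s y, pStep m s g y = m⁻¹ * Real.log (gSm H s y) := fun s y => by
      simp [pStep, gSm, hm0, hH]
    simp only [hP]
    refine ⟨fun r hr y => ?_, fun y => ?_⟩
    · have d1 := (((gSm_ds hd hd' b0 b1' b2' (qstar - r) y (by linarith)).comp r (hsub r)).log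
        (hpos _ _).ne').const_mul m⁻¹
      have d1' : deriv (fun r' => m⁻¹ * Real.log (gSm H (qstar - r') y)) r = _ := d1.deriv
      have d2 : deriv (fun y' => m⁻¹ * Real.log (gSm H (qstar - r) y')) =
          fun y' => m⁻¹ * (gSm H1 (qstar - r) y' / gSm H (qstar - r) y') :=
        funext fun y => (((gSm_dy hd b0 b1' _ y).log (hpos _ _).ne').const_mul m⁻¹).deriv
      have d3 := (((gSm_dy hd' b1' b2' (qstar - r) y).div (gSm_dy hd b0 b1' (qstar - r) y)
        (hpos _ _).ne').const_mul m⁻¹)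
      have d3' : deriv (fun y' => m⁻¹ * (gSm H1 (qstar - r) y' / gSm H (qstar - r) y')) y = _ :=
        d3.deriv
      rw [d1', d2, d3']
      have hne := (hpos (qstar - r) y).ne'
      simp only [Function.comp_def]
      field_simp
      ring
    · have c := ((gSm_cont hd b0 b1' y).comp (by fun_prop :
        Continuous fun r : ℝ => qstar - r)).tendsto qstar
      simp only [Function.comp_def, sub_self, gSm_zero] at c
      have c2 := (c.log (Real.exp_pos _).ne').const_mul m⁻¹
      simp only [hH, Real.log_exp, inv_mul_cancel_left₀ hm0] at c2
      exact c2.mono_left nhdsWithin_le_nhds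

end
end

section
/- At t = 0, the interpolating free energy equals α̃_N(0) = log 2 + f(0,h;x,β), for every N ≥ 1, β ≥ 0, h ∈ ℝ, and every piecewise constant functional order parameter x with all m_a > 0, where f is the Parisi function. -/
open MeasureTheory ProbabilityTheory Filter

noncomputable section

lemma integrable_exp_lip {c B : ℝ} {g : ℝ → ℝ} (hB : 0 ≤ B)
    (hg : ∀ x y, g x ≤ g y + B * |x - y|) (hm : 0 < c) (s y : ℝ) :
    Integrable (fun z => Real.exp (c * g (y + z * s))) stdGauss := by
  have hcont : Continuous g := by
    have : LipschitzWith ⟨B, hB⟩ g := LipschitzWith.of_le_add_mul _ (fun x y => by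
      rw [Real.dist_eq]; exact hg x y)
    exact this.continuous
  have h1 : Integrable (fun z : ℝ => Real.exp ((c * B * |s|) * |z|)) stdGauss := by
    unfold stdGauss
    exact integrable_exp_mul_abs (integrable_exp_mul_gaussianReal _)
      (integrable_exp_mul_gaussianReal _)
  refine (h1.const_mul (Real.exp (c * g y))).mono' (by fun_prop) (ae_of_all _ fun z => ?_)
  rw [Real.norm_eq_abs, abs_of_pos (Real.exp_pos _), ← Real.exp_add]
  apply Real.exp_le_exp.2
  have := hg (y + z * s) y
  rw [add_sub_cancel_left, abs_mul] at this
  nlinarith [mul_le_mul_of_nonneg_left this hm.le]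

lemma integral_exp_lip_pos {c B : ℝ} {g : ℝ → ℝ} (hB : 0 ≤ B)
    (hg : ∀ x y, g x ≤ g y + B * |x - y|) (hm : 0 < c) (s y : ℝ) :
    0 < ∫ z, Real.exp (c * g (y + z * s)) ∂stdGauss :=
  integral_exp_pos (integrable_exp_lip hB hg hm s y)

lemma logcosh_lip_s4 (β : ℝ) (hβ : 0 ≤ β) (x y : ℝ) :
    Real.log (Real.cosh (β * x)) ≤ Real.log (Real.cosh (β * y)) + β * |x - y| := by
  have hle : Real.cosh (β * x) ≤ Real.cosh (β * y) * Real.exp (β * |x - y|) := by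
    rw [Real.cosh_eq, Real.cosh_eq]
    have h1 : Real.exp (β * x) ≤ Real.exp (β * y) * Real.exp (β * |x - y|) := by
      rw [← Real.exp_add]
      apply Real.exp_le_exp.2
      nlinarith [mul_le_mul_of_nonneg_left (le_abs_self (x - y)) hβ]
    have h2 : Real.exp (-(β * x)) ≤ Real.exp (-(β * y)) * Real.exp (β * |x - y|) := by
      rw [← Real.exp_add]
      apply Real.exp_le_exp.2
      nlinarith [mul_le_mul_of_nonneg_left (neg_abs_le (x - y)) hβ]
    linarith
  have := Real.log_le_log (Real.cosh_pos _) hle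
  rwa [Real.log_mul (Real.cosh_pos _).ne' (Real.exp_pos _).ne', Real.log_exp] at this

lemma pStep_lip_s4 {c B s : ℝ} {g : ℝ → ℝ} (hB : 0 ≤ B)
    (hg : ∀ x y, g x ≤ g y + B * |x - y|) (hm : 0 < c) (x y : ℝ) :
    pStep c s g x ≤ pStep c s g y + B * |x - y| := by
  unfold pStep
  rw [if_neg hm.ne', if_neg hm.ne']
  have hle : ∫ z, Real.exp (c * g (x + z * Real.sqrt s)) ∂stdGauss ≤
      (∫ z, Real.exp (c * g (y + z * Real.sqrt s)) ∂stdGauss) * Real.exp (c * (B * |x - y|)) := by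
    rw [← integral_mul_const]
    refine integral_mono (integrable_exp_lip hB hg hm _ _)
      ((integrable_exp_lip hB hg hm _ _).mul_const _) fun z => ?_
    show _ ≤ _ * _
    rw [← Real.exp_add]
    apply Real.exp_le_exp.2
    have := hg (x + z * Real.sqrt s) (y + z * Real.sqrt s)
    rw [add_sub_add_right_eq_sub] at this
    nlinarith [mul_le_mul_of_nonneg_left this hm.le]
  have h2 := Real.log_le_log (integral_exp_lip_pos hB hg hm _ _) hle
  rw [Real.log_mul (integral_exp_lip_pos hB hg hm _ _).ne' (Real.exp_pos _).ne', Real.log_exp] at h2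
  calc _ ≤ c⁻¹ * (Real.log (∫ z, Real.exp (c * g (y + z * Real.sqrt s)) ∂stdGauss)
        + c * (B * |x - y|)) := mul_le_mul_of_nonneg_left h2 (inv_nonneg.2 hm.le)
    _ = _ := by rw [mul_add, inv_mul_cancel_left₀ hm.ne']

lemma parisiLevel_lip (K : ℕ) (q m : ℕ → ℝ) (β : ℝ) (hβ : 0 ≤ β)
    (hm : ∀ a, 1 ≤ a → a ≤ K → 0 < m a) (j : ℕ) (hj : j ≤ K) :
    ∀ x y, parisiLevel K q m β j x ≤ parisiLevel K q m β j y + β * |x - y| := by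
  induction j with
  | zero => exact logcosh_lip_s4 β hβ
  | succ j ih =>
    exact pStep_lip_s4 hβ (ih (by omega)) (hm _ (by omega) (by omega))

/-- The local field on site `i` once the last `j` levels have been integrated out. -/
def locField (N K : ℕ) (q : ℕ → ℝ) (h : ℝ) (j : ℕ) (Js : Fin K → Fin N → ℝ) (i : Fin N) : ℝ :=
  h + ∑ a : Fin K, if a.val < K - j then Real.sqrt (q (a.val + 1) - q a.val) * Js a i else 0

lemma locField_update (N K : ℕ) (q : ℕ → ℝ) (h : ℝ) (j : ℕ) (hj : j < K)
    (Js : Fin K → Fin N → ℝ) (g : Fin N → ℝ) (i : Fin N) :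
    locField N K q h j (Function.update Js ⟨K - 1 - j, by omega⟩ g) i =
      locField N K q h (j + 1) Js i + g i * Real.sqrt (q (K - j) - q (K - j - 1)) := by
  unfold locField
  rw [add_assoc]
  congr 1
  have e : g i * Real.sqrt (q (K - j) - q (K - j - 1)) =
      ∑ a : Fin K, if a = ⟨K - 1 - j, by omega⟩ then
        g i * Real.sqrt (q (K - j) - q (K - j - 1)) else 0 := by simp
  rw [e, ← Finset.sum_add_distrib]
  refine Finset.sum_congr rfl fun a _ => ?_
  by_cases ha : a = ⟨K - 1 - j, by omega⟩
  · subst ha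
    have e1 : K - 1 - j + 1 = K - j := by omega
    have e2 : K - 1 - j = K - j - 1 := by omega
    rw [if_pos (by simp; omega), if_neg (by simp; omega), if_pos rfl]
    simp only [Function.update_self, e1]
    rw [e2]; ring
  · have hv : a.val ≠ K - 1 - j := fun hv => ha (Fin.ext hv)
    rw [if_neg ha, Function.update_of_ne ha, add_zero]
    by_cases hl : a.val < K - j
    · rw [if_pos hl, if_pos (by omega)]
    · rw [if_neg hl, if_neg (by omega)]

lemma Ztil_zero (N K : ℕ) (q : ℕ → ℝ) (β h : ℝ) (Jc : Fin N → Fin N → ℝ)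
    (Js : Fin K → Fin N → ℝ) :
    Ztil N K β h 0 q Jc Js =
      ∏ i, (2 * Real.cosh (β * locField N K q h 0 Js i)) := by
  have h1 : ∀ i, 2 * Real.cosh (β * locField N K q h 0 Js i) =
      ∑ b : Bool, Real.exp (β * locField N K q h 0 Js i * spin b) := by
    intro i
    simp [spin, Real.cosh_eq]
    ring
  simp_rw [h1]
  rw [Finset.prod_univ_sum, Fintype.piFinset_univ]
  unfold Ztil
  refine Finset.sum_congr rfl fun σ _ => ?_
  rw [← Real.exp_sum]
  unfold bFac locField
  congr 1
  have h2 : ∑ a : Fin K, Real.sqrt (q (a.val + 1) - q a.val) * ∑ i, Js a i * spin (σ i) =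
      ∑ i, (∑ a : Fin K, Real.sqrt (q (a.val + 1) - q a.val) * Js a i) * spin (σ i) := by
    simp_rw [Finset.mul_sum, Finset.sum_mul]
    rw [Finset.sum_comm]
    simp_rw [mul_assoc]
  rw [h2]
  simp only [zero_div, Real.sqrt_zero, mul_zero, zero_mul, zero_add, sub_zero, Real.sqrt_one,
    mul_one, Nat.sub_zero, Fin.is_lt, if_true]
  rw [Finset.mul_sum, Finset.mul_sum, ← Finset.sum_add_distrib]
  refine Finset.sum_congr rfl fun i _ => ?_
  ring

lemma Wrec_zero (N K : ℕ) (q m : ℕ → ℝ) (β h : ℝ) (hβ : 0 ≤ β)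
    (hm : ∀ a, 1 ≤ a → a ≤ K → 0 < m a) (j : ℕ) (hj : j ≤ K)
    (Jc : Fin N → Fin N → ℝ) (Js : Fin K → Fin N → ℝ) :
    Wrec N K β h 0 q m j Jc Js =
      ∏ i, (2 * Real.exp (parisiLevel K q m β j (locField N K q h j Js i))) := by
  induction j generalizing Js with
  | zero =>
    simp only [Wrec, parisiLevel, Real.exp_log (Real.cosh_pos _)]
    exact Ztil_zero N K q β h Jc Js
  | succ j ih =>
    have hjK : j < K := by omega
    have hc : 0 < m (K - j) := hm _ (by omega) (by omega)
    have hlip := parisiLevel_lip K q m β hβ hm j hjK.le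
    simp only [Wrec, dif_pos hjK]
    simp_rw [ih hjK.le, locField_update N K q h j hjK]
    have h1 : ∀ g : Fin N → ℝ,
        (∏ i, (2 * Real.exp (parisiLevel K q m β j (locField N K q h (j + 1) Js i
          + g i * Real.sqrt (q (K - j) - q (K - j - 1)))))) ^ m (K - j) =
        ∏ i, ((2 : ℝ) ^ m (K - j) * Real.exp (m (K - j) * parisiLevel K q m β j
          (locField N K q h (j + 1) Js i + g i * Real.sqrt (q (K - j) - q (K - j - 1))))) := by
      intro g
      rw [← Real.finsetProd_rpow _ _ (fun i _ => by positivity)]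
      refine Finset.prod_congr rfl fun i _ => ?_
      rw [Real.mul_rpow (by norm_num) (Real.exp_pos _).le, ← Real.exp_mul, mul_comm (m (K - j))]
    simp_rw [h1]
    unfold gaussN
    rw [integral_fintype_prod_eq_prod (𝕜 := ℝ) (fun i z => (2 : ℝ) ^ m (K - j) *
      Real.exp (m (K - j) * parisiLevel K q m β j
          (locField N K q h (j + 1) Js i + z * Real.sqrt (q (K - j) - q (K - j - 1)))))]
    simp_rw [integral_const_mul]
    have hpos := fun i => integral_exp_lip_pos hβ hlip hc
      (Real.sqrt (q (K - j) - q (K - j - 1))) (locField N K q h (j + 1) Js i)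
    rw [← Real.finsetProd_rpow _ _ (fun i _ => mul_nonneg (by positivity) (hpos i).le)]
    refine Finset.prod_congr rfl fun i _ => ?_
    rw [Real.mul_rpow (by positivity) (hpos i).le, Real.rpow_rpow_inv (by norm_num) hc.ne']
    congr 1
    simp only [parisiLevel, pStep, if_neg hc.ne']
    rw [Real.rpow_def_of_pos (hpos i), mul_comm]

/-- at `t = 0` the interpolating free energy equals
`α̃_N(0) = log 2 + f(0, h; x, β)`, for every `N ≥ 1`, `β ≥ 0`, `h ∈ ℝ`, and every
piecewise constant functional order parameter with all `m_a > 0`; here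
`f(0, h; x, β) = parisiLevel X.K X.q X.m β X.K h` is the Parisi function at `q = 0`. -/
theorem atilde_at_zero (N : ℕ) (hN : 1 ≤ N) (X : OrderParam)
    (hm : ∀ a, 1 ≤ a → a ≤ X.K → 0 < X.m a) (β h : ℝ) (hβ : 0 ≤ β) :
    atilde N X.K β h X.q X.m 0 = Real.log 2 + parisiLevel X.K X.q X.m β X.K h := by
  have hloc : ∀ i, locField N X.K X.q h X.K 0 i = h := by
    intro i
    simp [locField]
  have hN0 : (N : ℝ) ≠ 0 := by
    have : N ≠ 0 := by omega
    exact_mod_cast this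
  unfold atilde
  simp_rw [Wrec_zero N X.K X.q X.m β h hβ hm X.K le_rfl, hloc]
  simp only [integral_const, probReal_univ, one_smul, Finset.prod_const, Finset.card_univ,
    Fintype.card_fin, Real.log_pow]
  rw [inv_mul_cancel_left₀ hN0, Real.log_mul (by norm_num) (Real.exp_pos _).ne', Real.log_exp]

end
end
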